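/- Let a, b ∈ F^* with |b| ≤ |a| ≤ 1 and let j be an integer with 0 ≤ j ≤ val(a). Then the set D = {(x,y) ∈ F² : y ∈ 𝔭^{−j}, ay² ∉ 𝔭^{j}, bx − ρay ∈ a𝔭^{−j}, bx ∈ 𝔭^{j}, ay ∈ 𝔭^{j}, y(bx+ay) ∈ 𝔭^{j}} equals the set {(x,y) ∈ F² : q^{−j} < |a^{−1}b²x²|, |bx| ≤ min(|a|q^{j}, q^{−j}), and y ∈ −a^{−1}bx + (bx)^{−1}𝔭^{j}}. Moreover D is empty unless j < val(a) < 3j. -/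

import Mathlib

/-!
The substitution `u = a⁻¹bx` makes the statement symmetric in `u` and `y`. On the left, `ay² ∉ 𝔭^j` and
`ay(u + y) ∈ 𝔭^j` force `val (u + y) > val y`, so the strict triangle inequality gives
`val u = val y`; on the right, `au² ∉ 𝔭^j` and `au(y + u) ∈ 𝔭^j` give the same equality
(`val_eq_of_mul_add_mem`). Once `val u = val y = v`, the conditions `ay(u + y) ∈ 𝔭^j` and
`au(y + u) ∈ 𝔭^j` are equivalent, and (as `ρ` is a unit) the remaining ones read, on both sides,
`-j ≤ v`, `val a + 2v < j`, `j ≤ val a + v`. These three inequalities imply `j < val a < 3j`.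
-/

open MeasureTheory
open Classical

noncomputable section

/-- The ambient setting: a nonarchimedean local field `F` whose residue field has
cardinality `q` and characteristic `p > 3`, containing a primitive cube root of
unity `ρ`, with normalized valuation `val`, uniformizer `ϖ`, an additive character
`ψ` which is trivial on the ring of integers `O` and nontrivial on `𝔭⁻¹`, an
additive Haar measure `μ` normalized by `μ(O) = 1` (so `μ(𝔭^j) = q^{-j}`), and a
multiplicative Haar measure `μs` on `F^*` normalized by `μs(O^*) = 1`. -/
structure CubicSetup (F : Type*) [Field F] [MeasurableSpace F] where
  q : ℕ
  val : F → ℤ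
  ϖ : F
  ρ : F
  ψ : F → ℂ
  μ : Measure F
  μs : Measure F
  residue_char : ∃ p f : ℕ, p.Prime ∧ 3 < p ∧ 0 < f ∧ q = p ^ f
  val_mul : ∀ x y : F, x ≠ 0 → y ≠ 0 → val (x * y) = val x + val y
  val_add : ∀ x y : F, x ≠ 0 → y ≠ 0 → x + y ≠ 0 → min (val x) (val y) ≤ val (x + y)
  uniformizer_ne_zero : ϖ ≠ 0
  val_uniformizer : val ϖ = 1
  val_surjective : ∀ n : ℤ, ∃ x : F, x ≠ 0 ∧ val x = n
  rho_prim_cubic : ρ ^ 2 + ρ + 1 = 0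
  psi_add : ∀ x y : F, ψ (x + y) = ψ x * ψ y
  psi_trivial_on_O : ∀ x : F, x ≠ 0 → 0 ≤ val x → ψ x = 1
  psi_zero : ψ 0 = 1
  psi_nontrivial : ∃ x : F, x ≠ 0 ∧ -1 ≤ val x ∧ ψ x ≠ 1
  mu_add_invariant : ∀ (a : F) (s : Set F), μ ((a + ·) ⁻¹' s) = μ s
  mu_ball : ∀ j : ℤ, μ {x : F | x = 0 ∨ j ≤ val x} = ENNReal.ofReal ((q : ℝ) ^ (-j))
  mus_mul_invariant : ∀ a : F, a ≠ 0 → ∀ s : Set F, μs ((a * ·) ⁻¹' s) = μs s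
  mus_units : μs {x : F | x ≠ 0 ∧ val x = 0} = 1
  mus_zero : μs {0} = 0

namespace CubicSetup

variable {F : Type*} [Field F] [MeasurableSpace F] (S : CubicSetup F)

/-- The normalized absolute value `|x| = q^{-val x}` (with `|0| = 0`). -/
def A (x : F) : ℝ := if x = 0 then 0 else (S.q : ℝ) ^ (-S.val x)

/-- Membership in the ring of integers `O`. -/
def inO (x : F) : Prop := x = 0 ∨ 0 ≤ S.val x

/-- The fractional ideal `𝔭^j = {x : val x ≥ j}`. -/
def pid (j : ℤ) : Set F := {x : F | x = 0 ∨ j ≤ S.val x}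

/-- The cubic exponential integral `C(a,b) = ∫_O ψ(ax + bx³) dx`. -/
def Cint (a b : F) : ℂ := ∫ x in S.pid 0, S.ψ (a * x + b * x ^ 3) ∂S.μ

/-- The cubic exponential integral `C_ℓ(a,b) = ∫_{val x = ℓ} ψ(ax + bx³) dx`. -/
def Cl (ℓ : ℤ) (a b : F) : ℂ :=
  ∫ x in {u : F | u ≠ 0 ∧ S.val u = ℓ}, S.ψ (a * x + b * x ^ 3) ∂S.μ

/-- The cubic exponential integral `C₀(a,b) = ∫_{O^*} ψ(au + bu³) du`. -/
def C0 (a b : F) : ℂ :=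
  ∫ u in {x : F | x ≠ 0 ∧ S.val x = 0}, S.ψ (a * u + b * u ^ 3) ∂S.μ

/-- The Kloosterman integral `K(a,b) = ∫_{O^*} ψ(au + bu⁻¹) du`. -/
def Kl (a b : F) : ℂ :=
  ∫ u in {x : F | x ≠ 0 ∧ S.val x = 0}, S.ψ (a * u + b * u⁻¹) ∂S.μ

/-- `Z` is a complete set of representatives for `𝔭^L` modulo `𝔭^ℓ`. -/
def IsReps (L ℓ : ℤ) (Z : Finset F) : Prop :=
  (∀ z ∈ Z, z ∈ S.pid L) ∧ ∀ x ∈ S.pid L, ∃! z, z ∈ Z ∧ x - z ∈ S.pid ℓ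

/-- `R` is a complete set of representatives of `O^*` for the units of the
residue field `(O/𝔭)^*`. -/
def IsUnitReps (R : Finset F) : Prop :=
  (∀ r ∈ R, r ≠ 0 ∧ S.val r = 0) ∧
    ∀ x : F, x ≠ 0 → S.val x = 0 → ∃! r, r ∈ R ∧ x - r ∈ S.pid 1

/-- The big cell orbital integral `I(a,b)`: the integral over `(x,y,z,s) ∈ F⁴`,
`t ∈ F^*` of the characteristic function of `O^8` evaluated at
`(0, t, t⁻¹a, t(x+as), t⁻¹b, t(bs−y), t⁻¹(xb+yρ²a), t[(xb+yρ²a)s−(xy+zρ)])`,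
times `|t|² ψ[x + y + 2a(xy−z)yρ² − 2bxzρ]`, w.r.t. `d*t ds dx dy dz`. -/
def Iab (a b : F) : ℂ :=
  ∫ z, (∫ y, (∫ x, (∫ s, (∫ t,
    (if S.inO (0 : F) ∧ S.inO t ∧ S.inO (t⁻¹ * a) ∧ S.inO (t * (x + a * s)) ∧
        S.inO (t⁻¹ * b) ∧ S.inO (t * (b * s - y)) ∧
        S.inO (t⁻¹ * (x * b + y * S.ρ ^ 2 * a)) ∧
        S.inO (t * ((x * b + y * S.ρ ^ 2 * a) * s - (x * y + z * S.ρ)))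
      then ((S.A t : ℂ) ^ 2) *
          S.ψ (x + y + 2 * a * (x * y - z) * y * S.ρ ^ 2 - 2 * b * x * z * S.ρ)
      else 0) ∂S.μs) ∂S.μ) ∂S.μ) ∂S.μ) ∂S.μ

/-- The integral `I(j; a, b)`. -/
def Ij (j : ℤ) (a b : F) : ℂ :=
  (S.q : ℂ) ^ (-(2 * j)) *
    ∫ z, (∫ y, (∫ x, (∫ s,
      (if x + a * s ∈ S.pid (-j) ∧ y - b * s ∈ S.pid (-j) ∧
          (x * b + y * S.ρ ^ 2 * a) * s - (x * y + z * S.ρ) ∈ S.pid (-j) ∧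
          x * b + y * S.ρ ^ 2 * a ∈ S.pid j
        then S.ψ (x + y + 2 * a * S.ρ ^ 2 * x * y ^ 2 -
            (2 * S.ρ * b * x + 2 * S.ρ ^ 2 * a * y) * z)
        else 0) ∂S.μ) ∂S.μ) ∂S.μ) ∂S.μ

/-- The domain `D_j(a,b) = {(x,y) : bx − ρay ∈ a𝔭^{-j}, bx ∈ 𝔭^j, ay ∈ 𝔭^j,
y(bx+ay) ∈ 𝔭^j}`. -/
def Dset (j : ℤ) (a b : F) : Set (F × F) :=
  {p : F × F | a⁻¹ * (b * p.1 - S.ρ * a * p.2) ∈ S.pid (-j) ∧ b * p.1 ∈ S.pid j ∧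
    a * p.2 ∈ S.pid j ∧ p.2 * (b * p.1 + a * p.2) ∈ S.pid j}

/-- The common integrand `ψ[(1 − ρa⁻¹b)x − (1+2ρ)y + 2a⁻¹b²x³]`. -/
def integrand (a b x y : F) : ℂ :=
  S.ψ ((1 - S.ρ * a⁻¹ * b) * x - (1 + 2 * S.ρ) * y + 2 * a⁻¹ * b ^ 2 * x ^ 3)

/-- `I₁^{(j)}(a,b)`: the part of the integral with `y ∈ 𝔭^{-m}`, where
`m = min(j, val(a)−j, ⌊(val(a)−j)/2⌋)`. -/
def I1j (j : ℤ) (a b : F) : ℂ :=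
  ((S.A a : ℂ))⁻¹ * ∫ y, (∫ x,
    (if (x, y) ∈ S.Dset j a b ∧
        y ∈ S.pid (-(min j (min (S.val a - j) ((S.val a - j) / 2))))
      then S.integrand a b x y else 0) ∂S.μ) ∂S.μ

/-- `I₂^{(j)}(a,b)`: the part of the integral with `y ∉ 𝔭^{-j}`. -/
def I2j (j : ℤ) (a b : F) : ℂ :=
  ((S.A a : ℂ))⁻¹ * ∫ y, (∫ x,
    (if (x, y) ∈ S.Dset j a b ∧ y ∉ S.pid (-j)
      then S.integrand a b x y else 0) ∂S.μ) ∂S.μ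

/-- `I₃^{(j)}(a,b)`: the part of the integral with `y ∈ 𝔭^{-j}` and `ay² ∉ 𝔭^j`. -/
def I3j (j : ℤ) (a b : F) : ℂ :=
  ((S.A a : ℂ))⁻¹ * ∫ y, (∫ x,
    (if (x, y) ∈ S.Dset j a b ∧ y ∈ S.pid (-j) ∧ a * y ^ 2 ∉ S.pid j
      then S.integrand a b x y else 0) ∂S.μ) ∂S.μ

/-- `G_j^ℓ(a,b) = ∫∫_{Γ_j} ψ(ϖ^ℓ b⁻¹ x − 27⁻¹ ϖ^{3ℓ} a⁻¹b⁻¹ x³ + ϖ^ℓ a⁻¹ y) dx dy`. -/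
def Gint (j ℓ : ℤ) (a b : F) : ℂ :=
  ∫ y, (∫ x,
    (if S.inO x ∧ S.inO y ∧ a⁻¹ * (x ^ 3 - y ^ 3) ∈ S.pid (-j)
      then S.ψ (S.ϖ ^ ℓ * b⁻¹ * x - (27 : F)⁻¹ * S.ϖ ^ (3 * ℓ) * a⁻¹ * b⁻¹ * x ^ 3 +
          S.ϖ ^ ℓ * a⁻¹ * y)
      else 0) ∂S.μ) ∂S.μ

/-- `Γ_j = {(x,y) ∈ O × O : x³ − y³ ∈ a𝔭^{-j}}`. -/
def Gamma (a : F) (j : ℤ) : Set (F × F) :=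
  {p : F × F | S.inO p.1 ∧ S.inO p.2 ∧ a⁻¹ * (p.1 ^ 3 - p.2 ^ 3) ∈ S.pid (-j)}

/-- `𝔭^{⌈m/3⌉} × 𝔭^{⌈m/3⌉}`. -/
def Ball (m : ℤ) : Set (F × F) := S.pid (-((-m) / 3)) ×ˢ S.pid (-((-m) / 3))

/-- `{(x,y) : |x| = q^{-n}, y ∈ ρ^k x + 𝔭^{m−2n}}`. -/
def Ann (m n : ℤ) (k : ℕ) : Set (F × F) :=
  {p : F × F | p.1 ≠ 0 ∧ S.val p.1 = n ∧ p.2 - S.ρ ^ k * p.1 ∈ S.pid (m - 2 * n)}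

/-- The degenerate orbital integral `I₁(a)`, integrated w.r.t. `dx dy dz d*t`. -/
def Ione (a : F) : ℂ :=
  ∫ t, (∫ z, (∫ y, (∫ x,
    (if S.inO t ∧ S.inO (t * (a + x)) ∧ S.inO (a ^ (-2 : ℤ) * t⁻¹) ∧ S.inO (t * y) ∧
        S.inO (a ^ (-2 : ℤ) * t⁻¹ * x) ∧
        S.inO (t * (S.ρ * a * y - S.ρ ^ 2 * x * y - z))
      then ((S.A t : ℂ) ^ 2) *
          S.ψ (-(S.ρ * a⁻¹ * x * y) - S.ρ ^ 2 * a⁻¹ * z + a ^ (-2 : ℤ) * x * z + x + y)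
      else 0) ∂S.μ) ∂S.μ) ∂S.μ) ∂S.μs

/-- The degenerate orbital integral `I₂(a)`, integrated w.r.t. `dx dy dz d*t`. -/
def Itwo (a : F) : ℂ :=
  ∫ t, (∫ z, (∫ y, (∫ x,
    (if S.inO t ∧ S.inO (a ^ (-2 : ℤ) * t⁻¹) ∧ S.inO (t * x) ∧ S.inO (t * (a - y)) ∧
        S.inO (a ^ (-2 : ℤ) * t⁻¹ * y) ∧ S.inO (t * (x * a - x * y - z * S.ρ))
      then ((S.A t : ℂ) ^ 2) *
          S.ψ (a ^ (-2 : ℤ) * (x * y - z) * y - S.ρ * (x * y * S.ρ ^ 2 + z) * a⁻¹ + x + y)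
      else 0) ∂S.μ) ∂S.μ) ∂S.μ) ∂S.μs

theorem val_one : S.val 1 = 0 := by
  have h := S.val_mul 1 1 one_ne_zero one_ne_zero
  rw [mul_one] at h
  omega

theorem val_neg {x : F} (hx : x ≠ 0) : S.val (-x) = S.val x := by
  have h := S.val_mul (-1) (-1) (neg_ne_zero.2 one_ne_zero) (neg_ne_zero.2 one_ne_zero)
  rw [neg_mul_neg, mul_one, S.val_one] at h
  have h' := S.val_mul (-1) x (neg_ne_zero.2 one_ne_zero) hx
  rw [neg_one_mul] at h'
  omega

theorem rho_ne_zero : S.ρ ≠ 0 := by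
  intro h
  have := S.rho_prim_cubic
  simp [h] at this

theorem val_rho : S.val S.ρ = 0 := by
  have h0 := S.rho_ne_zero
  have h3 : S.ρ * (S.ρ * S.ρ) = 1 := by linear_combination (S.ρ - 1) * S.rho_prim_cubic
  have h := S.val_mul S.ρ (S.ρ * S.ρ) h0 (mul_ne_zero h0 h0)
  rw [h3, S.val_one, S.val_mul _ _ h0 h0] at h
  omega

theorem one_lt_q : (1 : ℝ) < S.q := by
  obtain ⟨p, f, -, hp, hf, hq⟩ := S.residue_char
  rw [hq]
  exact_mod_cast Nat.one_lt_pow hf.ne' (by omega)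

theorem mem_pid {x : F} (hx : x ≠ 0) (m : ℤ) : x ∈ S.pid m ↔ m ≤ S.val x := by
  simp [pid, hx]

theorem A_le_iff (x : F) (m : ℤ) : S.A x ≤ (S.q : ℝ) ^ (-m) ↔ x ∈ S.pid m := by
  have hq := S.one_lt_q
  by_cases hx : x = 0
  · have : (0 : ℝ) ≤ (S.q : ℝ) ^ (-m) := by positivity
    simpa [A, pid, hx] using this
  · rw [S.mem_pid hx, A, if_neg hx, zpow_le_zpow_iff_right₀ hq]
    omega

theorem sub_mem_pid {x y : F} {m : ℤ} (hx : x ∈ S.pid m) (hy : y ∈ S.pid m) :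
    x - y ∈ S.pid m := by
  by_cases hx0 : x = 0
  · by_cases hy0 : y = 0
    · exact Or.inl (by simp [hx0, hy0])
    · rw [hx0, zero_sub, S.mem_pid (neg_ne_zero.2 hy0), S.val_neg hy0]
      exact (S.mem_pid hy0 m).1 hy
  by_cases hy0 : y = 0
  · simpa [hy0] using hx
  by_cases h : x - y = 0
  · exact Or.inl h
  rw [S.mem_pid hx0] at hx
  rw [S.mem_pid hy0] at hy
  rw [S.mem_pid h]
  have := S.val_add x (-y) hx0 (neg_ne_zero.2 hy0) (by rwa [← sub_eq_add_neg])
  rw [S.val_neg hy0, ← sub_eq_add_neg] at this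
  omega

/-- If `as² ∉ 𝔭^j` but `as(s + t) ∈ 𝔭^j`, then `s + t` is strictly smaller than `s`, so that
`s` and `t` have the same valuation. -/
theorem val_eq_of_mul_add_mem {a s t : F} {j : ℤ} (ha : a ≠ 0) (h1 : a * s ^ 2 ∉ S.pid j)
    (h2 : a * s * (s + t) ∈ S.pid j) : s ≠ 0 ∧ t ≠ 0 ∧ S.val t = S.val s := by
  have hs : s ≠ 0 := by
    rintro rfl
    exact h1 (Or.inl (by simp))
  have has := mul_ne_zero ha hs
  have ht : t ≠ 0 := by
    rintro rfl
    apply h1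
    convert h2 using 1
    ring
  refine ⟨hs, ht, ?_⟩
  by_cases h0 : s + t = 0
  · rw [eq_neg_of_add_eq_zero_right h0, S.val_neg hs]
  rw [S.mem_pid (mul_ne_zero has h0), S.val_mul _ _ has h0] at h2
  rw [sq, ← mul_assoc, S.mem_pid (mul_ne_zero has hs), S.val_mul _ _ has hs] at h1
  have e1 := S.val_add (s + t) (-s) h0 (neg_ne_zero.2 hs) (by simpa using ht)
  have e2 := S.val_add (s + t) (-t) h0 (neg_ne_zero.2 ht) (by simpa using hs)
  rw [S.val_neg hs, add_neg_cancel_comm] at e1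
  rw [S.val_neg ht, add_neg_cancel_right] at e2
  omega

/-- The two descriptions of the domain agree, in the coordinates `u = a⁻¹bx` and `y`. -/
theorem domain_iff {a u y : F} {j : ℤ} (ha : a ≠ 0) :
    (y ∈ S.pid (-j) ∧ a * y ^ 2 ∉ S.pid j ∧ u - S.ρ * y ∈ S.pid (-j) ∧ a * u ∈ S.pid j ∧
      a * y ∈ S.pid j ∧ a * y * (y + u) ∈ S.pid j) ↔
    (a * u ^ 2 ∉ S.pid j ∧ u ∈ S.pid (-j) ∧ a * u ∈ S.pid j ∧ a * u * (u + y) ∈ S.pid j) := by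
  -- Membership in `𝔭^m` depends only on the valuation, so `u` and `y` are interchangeable
  -- as soon as their valuations agree.
  have key : ∀ s t : F, s ≠ 0 → t ≠ 0 → S.val t = S.val s →
      (∀ m, t ∈ S.pid m ↔ s ∈ S.pid m) ∧ (∀ m, a * t ∈ S.pid m ↔ a * s ∈ S.pid m) ∧
      (∀ m, a * t ^ 2 ∈ S.pid m ↔ a * s ^ 2 ∈ S.pid m) ∧
      (∀ m, a * t * (t + s) ∈ S.pid m ↔ a * s * (s + t) ∈ S.pid m) := by
    intro s t hs ht h
    refine ⟨fun m => ?_, fun m => ?_, fun m => ?_, fun m => ?_⟩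
    · rw [S.mem_pid hs, S.mem_pid ht, h]
    · rw [S.mem_pid (mul_ne_zero ha hs), S.mem_pid (mul_ne_zero ha ht), S.val_mul _ _ ha hs,
        S.val_mul _ _ ha ht, h]
    · rw [sq, sq, S.mem_pid (by simp [ha, ht]), S.mem_pid (by simp [ha, hs]),
        S.val_mul _ _ ha (by simp [ht]), S.val_mul _ _ ha (by simp [hs]), S.val_mul _ _ ht ht,
        S.val_mul _ _ hs hs, h]
    · rw [add_comm t s]
      by_cases h0 : s + t = 0
      · simp [h0]
      · rw [S.mem_pid (by simp [ha, ht, h0]), S.mem_pid (by simp [ha, hs, h0]),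
          S.val_mul _ _ (by simp [ha, ht]) h0, S.val_mul _ _ (by simp [ha, hs]) h0,
          S.val_mul _ _ ha ht, S.val_mul _ _ ha hs, h]
  constructor
  · rintro ⟨h1, h2, -, h4, -, h6⟩
    obtain ⟨hy, hu, h⟩ := S.val_eq_of_mul_add_mem ha h2 h6
    obtain ⟨k1, -, k3, k4⟩ := key y u hy hu h
    exact ⟨fun hc => h2 ((k3 j).1 hc), (k1 _).2 h1, h4, (k4 j).2 h6⟩
  · rintro ⟨h1, h2, h3, h4⟩
    obtain ⟨hu, hy, h⟩ := S.val_eq_of_mul_add_mem ha h1 h4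
    obtain ⟨k1, k2, k3, k4⟩ := key u y hu hy h
    refine ⟨(k1 _).2 h2, fun hc => h1 ((k3 j).1 hc), S.sub_mem_pid h2 ?_, h3, (k2 j).2 h3,
      (k4 j).2 h4⟩
    have hr := S.rho_ne_zero
    rw [S.mem_pid (mul_ne_zero hr hy), S.val_mul _ _ hr hy, S.val_rho, h, zero_add]
    exact (S.mem_pid hu _).1 h2

/-- Description of the domain of `I₃^{(j)}`, and the constraint `j < val a < 3j`
whenever it is nonempty. -/
theorem statement9 (a b : F) (ha : a ≠ 0) (hb : b ≠ 0)
    (h1 : S.A b ≤ S.A a) (h2 : S.A a ≤ 1) (j : ℤ) (hj0 : 0 ≤ j) (hj : j ≤ S.val a) :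
    ({p : F × F | p.2 ∈ S.pid (-j) ∧ a * p.2 ^ 2 ∉ S.pid j ∧
        a⁻¹ * (b * p.1 - S.ρ * a * p.2) ∈ S.pid (-j) ∧ b * p.1 ∈ S.pid j ∧
        a * p.2 ∈ S.pid j ∧ p.2 * (b * p.1 + a * p.2) ∈ S.pid j} =
      {p : F × F | (S.q : ℝ) ^ (-j) < S.A (a⁻¹ * b ^ 2 * p.1 ^ 2) ∧
        S.A (b * p.1) ≤ min (S.A a * (S.q : ℝ) ^ j) ((S.q : ℝ) ^ (-j)) ∧
        (b * p.1) * (p.2 + a⁻¹ * b * p.1) ∈ S.pid j}) ∧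
    (Set.Nonempty {p : F × F | p.2 ∈ S.pid (-j) ∧ a * p.2 ^ 2 ∉ S.pid j ∧
        a⁻¹ * (b * p.1 - S.ρ * a * p.2) ∈ S.pid (-j) ∧ b * p.1 ∈ S.pid j ∧
        a * p.2 ∈ S.pid j ∧ p.2 * (b * p.1 + a * p.2) ∈ S.pid j} →
      j < S.val a ∧ S.val a < 3 * j) := by
  constructor
  · ext ⟨x, y⟩
    simp only [Set.mem_ofPred_eq]
    obtain ⟨u, hu⟩ : ∃ u, u = a⁻¹ * b * x := ⟨_, rfl⟩
    have hbx : b * x = a * u := by rw [hu]; field_simp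
    have e1 : a⁻¹ * (b * x - S.ρ * a * y) = u - S.ρ * y := by rw [hbx]; field_simp
    have e2 : y * (b * x + a * y) = a * y * (y + u) := by rw [hbx]; ring
    have e3 : a⁻¹ * b ^ 2 * x ^ 2 = a * u ^ 2 := by rw [hu]; field_simp
    have e4 : b * x * (y + a⁻¹ * b * x) = a * u * (u + y) := by rw [hbx, ← hu]; ring
    have hq0 : (S.q : ℝ) ≠ 0 := (zero_lt_one.trans S.one_lt_q).ne'
    -- `|au| ≤ |a| q^j` says that `u ∈ 𝔭^{-j}`: rewrite the bound as `q^{-(val a - j)}`.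
    have e5 : S.A (a * u) ≤ S.A a * (S.q : ℝ) ^ j ↔ u ∈ S.pid (-j) := by
      have : S.A a * (S.q : ℝ) ^ j = (S.q : ℝ) ^ (-(S.val a - j)) := by
        rw [A, if_neg ha, ← zpow_add₀ hq0]
        congr 1
        ring
      rw [this, S.A_le_iff]
      by_cases h0 : u = 0
      · simp [h0, pid]
      · rw [S.mem_pid (mul_ne_zero ha h0), S.mem_pid h0, S.val_mul _ _ ha h0]
        omega
    rw [e1, e2, e3, e4, hbx, ← not_le, S.A_le_iff, le_min_iff, e5, S.A_le_iff, S.domain_iff ha,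
      and_assoc]
  · rintro ⟨⟨x, y⟩, h1, h2, -, -, h5, -⟩
    simp only at h1 h2 h5
    have hy : y ≠ 0 := by
      rintro rfl
      exact h2 (Or.inl (by simp))
    rw [S.mem_pid hy] at h1
    rw [S.mem_pid (mul_ne_zero ha hy), S.val_mul _ _ ha hy] at h5
    rw [sq, S.mem_pid (by simp [ha, hy]), S.val_mul _ _ ha (by simp [hy]),
      S.val_mul _ _ hy hy] at h2
    omega

end CubicSetup
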